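/- arXiv:1207.5747 — 12 statements merged into one kernel-verified Lean document; each statement's English description precedes it below -/
import Mathlib

section
/- If N ≤ σ0 then m = N is a pure Nash equilibrium of the parking spot selection game; moreover, if N < σ0 then m = N is the unique pure Nash equilibrium in {0, 1, …, N}. -/
/-- If N ≤ σ0 then m = N is a pure Nash equilibrium; moreover, if N < σ0
then m = N is the unique pure Nash equilibrium in {0, 1, …, N}. -/
theorem stmt_1 (N R : ℕ) (hN : 1 < N) (hR : 1 ≤ R)
    (β γ δ σ0 : ℝ) (hβ : 1 < β) (hβγ : β < γ)
    (hδ : δ = γ - β) (hσ0 : σ0 = R * (γ - 1) / δ)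
    (W : ℕ → ℝ)
    (hW : ∀ k : ℕ, W k = min 1 ((R : ℝ) / (k : ℝ)) + (1 - min 1 ((R : ℝ) / (k : ℝ))) * γ)
    (isNE : ℕ → Prop)
    (hNE : ∀ m : ℕ, isNE m ↔ m ≤ N ∧ (1 ≤ m → W m ≤ β) ∧ (m < N → β ≤ W (m + 1))) :
    ((N : ℝ) ≤ σ0 → isNE N) ∧
    ((N : ℝ) < σ0 → ∀ m : ℕ, m ≤ N → (isNE m ↔ m = N)) := by
  have hd : 0 < δ := by linarith
  have key : ∀ k : ℕ, 1 ≤ k → ((k : ℝ) ≤ σ0 → W k ≤ β) ∧ ((k : ℝ) < σ0 → W k < β) := by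
    intro k hk
    have hk0 : (0 : ℝ) < k := by exact_mod_cast hk
    rw [hW k, hσ0, le_div_iff₀ hd, lt_div_iff₀ hd]
    rcases le_total 1 ((R : ℝ) / k) with h | h
    · rw [min_eq_left h]
      constructor <;> intro _ <;> linarith
    · rw [min_eq_right h]
      have e : (R : ℝ) / k * (γ - 1) = R * (γ - 1) / k := by ring
      constructor
      · intro h1
        have : δ ≤ R * (γ - 1) / k := by
          rw [le_div_iff₀ hk0]; linarith
        linarith
      · intro h1
        have : δ < R * (γ - 1) / k := by
          rw [lt_div_iff₀ hk0]; linarith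
        linarith
  have first : (N : ℝ) ≤ σ0 → isNE N := fun h =>
    (hNE N).2 ⟨le_rfl, fun h1 => (key N h1).1 h, fun h1 => absurd h1 (lt_irrefl _)⟩
  refine ⟨first, fun h m hm => ⟨fun hne => ?_, fun e => e ▸ first h.le⟩⟩
  by_contra hc
  have hlt : m < N := lt_of_le_of_ne hm hc
  have h1 := ((hNE m).1 hne).2.2 hlt
  have h2 : ((m + 1 : ℕ) : ℝ) ≤ N := by exact_mod_cast hlt
  have h3 := (key (m + 1) (by omega)).2 (lt_of_le_of_lt h2 h)
  linarith
end

section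
/- If N > σ0 and σ0 is not an integer, then an integer m ∈ {0, 1, …, N} is a pure Nash equilibrium of the parking spot selection game if and only if m = ⌊σ0⌋. -/
/-- If N > σ0 and σ0 is not an integer, then m ∈ {0,…,N} is a pure Nash
equilibrium iff m = ⌊σ0⌋. -/
theorem stmt_2 (N R : ℕ) (hN : 1 < N) (hR : 1 ≤ R)
    (β γ δ σ0 : ℝ) (hβ : 1 < β) (hβγ : β < γ)
    (hδ : δ = γ - β) (hσ0 : σ0 = R * (γ - 1) / δ)
    (W : ℕ → ℝ)
    (hW : ∀ k : ℕ, W k = min 1 ((R : ℝ) / (k : ℝ)) + (1 - min 1 ((R : ℝ) / (k : ℝ))) * γ)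
    (isNE : ℕ → Prop)
    (hNE : ∀ m : ℕ, isNE m ↔ m ≤ N ∧ (1 ≤ m → W m ≤ β) ∧ (m < N → β ≤ W (m + 1)))
    (hlt : σ0 < (N : ℝ)) (hnint : ¬ ∃ z : ℤ, (z : ℝ) = σ0) :
    ∀ m : ℕ, m ≤ N → (isNE m ↔ m = ⌊σ0⌋₊) := by
  subst hδ
  have hd : 0 < γ - β := by linarith
  have hRpos : (1 : ℝ) ≤ R := by exact_mod_cast hR
  have hRs : (R : ℝ) < σ0 := by
    rw [hσ0, lt_div_iff₀ hd]
    nlinarith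
  have hs : σ0 * (γ - β) = R * (γ - 1) := by
    rw [hσ0]; field_simp
  have key : ∀ k : ℕ, 1 ≤ k → (W k ≤ β ↔ (k : ℝ) ≤ σ0) ∧ (β ≤ W k ↔ σ0 ≤ (k : ℝ)) := by
    intro k hk
    have hkpos : (0 : ℝ) < k := by exact_mod_cast hk
    rcases le_total (k : ℝ) R with h | h
    · have h1 : W k = 1 := by
        rw [hW, min_eq_left ((one_le_div hkpos).2 h)]; ring
      rw [h1]
      constructor <;> constructor <;> intro _ <;> linarith
    · have h1 : (W k - β) * k = (k - σ0) * (γ - β) := by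
        rw [hW, min_eq_right ((div_le_one hkpos).2 h)]
        have : (k - σ0) * (γ - β) = k * (γ - β) - R * (γ - 1) := by rw [← hs]; ring
        rw [this]; field_simp; ring
      refine ⟨⟨fun h => ?_, fun h => ?_⟩, ⟨fun h => ?_, fun h => ?_⟩⟩ <;> by_contra! h2 <;> nlinarith
  have hpos : 0 ≤ σ0 := by linarith
  intro m hm
  rw [hNE, eq_comm, Nat.floor_eq_iff hpos]
  constructor
  · rintro ⟨_, ha, hb⟩
    constructor
    · rcases Nat.eq_zero_or_pos m with h0 | h0
      · simpa [h0] using hpos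
      · exact (key m h0).1.1 (ha h0)
    · rcases hm.lt_or_eq with h | h
      · have h3 := (key (m + 1) (by omega)).2.1 (hb h)
        push_cast at h3
        refine lt_of_le_of_ne h3 fun h4 => hnint ⟨m + 1, ?_⟩
        push_cast; exact h4.symm
      · rw [h]; linarith
  · rintro ⟨ha, hb⟩
    refine ⟨hm, fun h => (key m h).1.2 ha, fun _ => (key (m + 1) (by omega)).2.2 ?_⟩
    push_cast; exact hb.le
end

section
/- If N > σ0 and σ0 is an integer, then an integer m ∈ {0, 1, …, N} is a pure Nash equilibrium of the parking spot selection game if and only if m = σ0 or m = σ0 − 1. -/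
/-- If N > σ0 and σ0 is an integer (σ0 = m0 ∈ ℕ), then m ∈ {0,…,N} is a pure
Nash equilibrium iff m = σ0 or m = σ0 − 1. -/
theorem stmt_3 (N R : ℕ) (hN : 1 < N) (hR : 1 ≤ R)
    (β γ δ σ0 : ℝ) (hβ : 1 < β) (hβγ : β < γ)
    (hδ : δ = γ - β) (hσ0 : σ0 = R * (γ - 1) / δ)
    (W : ℕ → ℝ)
    (hW : ∀ k : ℕ, W k = min 1 ((R : ℝ) / (k : ℝ)) + (1 - min 1 ((R : ℝ) / (k : ℝ))) * γ)
    (isNE : ℕ → Prop)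
    (hNE : ∀ m : ℕ, isNE m ↔ m ≤ N ∧ (1 ≤ m → W m ≤ β) ∧ (m < N → β ≤ W (m + 1)))
    (hlt : σ0 < (N : ℝ)) (m0 : ℕ) (hint : (m0 : ℝ) = σ0) :
    ∀ m : ℕ, m ≤ N → (isNE m ↔ m = m0 ∨ m = m0 - 1) := by
  have hd : 0 < δ := by linarith
  have hRr : (1 : ℝ) ≤ R := by exact_mod_cast hR
  have hm : (m0 : ℝ) * δ = R * (γ - 1) := by
    rw [hint, hσ0]; field_simp
  have hRm : (R : ℝ) < m0 := by
    by_contra h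
    have h1 := mul_le_mul_of_nonneg_right (not_lt.mp h) hd.le
    have h2 : (0 : ℝ) < R * (β - 1) := mul_pos (by linarith) (by linarith)
    subst hδ
    nlinarith
  have hRm' : R < m0 := by exact_mod_cast hRm
  have hmN : m0 < N := by
    have : (m0 : ℝ) < N := by rw [hint]; exact hlt
    exact_mod_cast this
  have key : ∀ k : ℕ, 1 ≤ k → (W k ≤ β ↔ k ≤ m0) ∧ (β ≤ W k ↔ m0 ≤ k) := by
    intro k hk
    have hk0 : (0 : ℝ) < k := by exact_mod_cast hk
    rcases le_or_gt k R with h | h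
    · have hkR : (k : ℝ) ≤ R := by exact_mod_cast h
      have hW1 : W k = 1 := by
        rw [hW, min_eq_left ((one_le_div hk0).mpr hkR)]; ring
      rw [hW1]
      exact ⟨⟨fun _ => by omega, fun _ => hβ.le⟩,
        ⟨fun h' => absurd h' (not_le.mpr hβ), fun h' => by omega⟩⟩
    · have hkR : (R : ℝ) ≤ k := by exact_mod_cast h.le
      have hWk : W k - β = δ / k * ((k : ℝ) - m0) := by
        rw [hW, min_eq_right ((div_le_one hk0).mpr hkR)]
        field_simp
        subst hδ
        linarith
      have hc : 0 < δ / k := div_pos hd hk0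
      constructor
      · rw [← sub_nonpos, hWk, ← not_lt, mul_pos_iff_of_pos_left hc, not_lt, sub_nonpos, Nat.cast_le]
      · rw [← sub_nonneg, hWk, mul_nonneg_iff_of_pos_left hc, sub_nonneg, Nat.cast_le]
  intro m hmle
  rw [hNE, (key (m + 1) (by omega)).2]
  constructor
  · rintro ⟨_, h1, h2⟩
    rcases Nat.eq_zero_or_pos m with h0 | h0
    · have := h2 (by omega)
      omega
    · have := (key m h0).1.mp (h1 h0)
      have := h2 (by omega)
      omega
  · intro h
    exact ⟨hmle, fun h1 => (key m h1).1.mpr (by omega), fun _ => by omega⟩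
end

section
/- The social cost function m ↦ C(m) on {0, 1, …, N} attains its minimum uniquely at m = min(N, R), and the minimum (optimal) value equals C_opt = min(N, R) + β·max(0, N − R). -/
/-- The social cost m ↦ C(m) on {0,…,N} attains its minimum uniquely at
m = min(N,R), with minimum value C_opt = min(N,R) + β·max(0, N − R). -/
theorem stmt_5 (N R : ℕ) (hN : 1 < N) (hR : 1 ≤ R)
    (β γ : ℝ) (hβ : 1 < β) (hβγ : β < γ)
    (W : ℕ → ℝ)
    (hW : ∀ k : ℕ, W k = min 1 ((R : ℝ) / (k : ℝ)) + (1 - min 1 ((R : ℝ) / (k : ℝ))) * γ)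
    (C : ℕ → ℝ) (hC0 : C 0 = (N : ℝ) * β)
    (hC : ∀ m : ℕ, 1 ≤ m → C m = (m : ℝ) * W m + ((N : ℝ) - (m : ℝ)) * β) :
    (∀ m : ℕ, m ≤ N → C (min N R) ≤ C m) ∧
    (∀ m : ℕ, m ≤ N → m ≠ min N R → C (min N R) < C m) ∧
    C (min N R) = (min N R : ℝ) + β * max 0 ((N : ℝ) - (R : ℝ)) := by
  have low : ∀ m : ℕ, m ≤ R → C m = (m : ℝ) + ((N : ℝ) - m) * β := by
    intro m hm
    rcases Nat.eq_zero_or_pos m with h | h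
    · subst h
      rw [hC0]
      simp
    · have hm0 : (0 : ℝ) < m := by exact_mod_cast h
      have hmR : (m : ℝ) ≤ R := by exact_mod_cast hm
      have h1 : (1 : ℝ) ≤ (R : ℝ) / m := by
        rw [le_div_iff₀ hm0]
        linarith
      rw [hC m h, hW, min_eq_left h1]
      ring
  have high : ∀ m : ℕ, R ≤ m → C m = (R : ℝ) + ((m : ℝ) - R) * γ + ((N : ℝ) - m) * β := by
    intro m hm
    have h : 1 ≤ m := le_trans hR hm
    have hm0 : (0 : ℝ) < m := by exact_mod_cast h
    have hmR : (R : ℝ) ≤ m := by exact_mod_cast hm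
    have h1 : (R : ℝ) / m ≤ 1 := by
      rw [div_le_iff₀ hm0]
      linarith
    rw [hC m h, hW, min_eq_right h1]
    field_simp
  have strict : ∀ m : ℕ, m ≤ N → m ≠ min N R → C (min N R) < C m := by
    intro m hm hne
    rw [low (min N R) (min_le_right _ _)]
    rcases le_total m R with h | h
    · have hlt : m < min N R := lt_of_le_of_ne (le_min hm h) hne
      have hlt' : (m : ℝ) < ((min N R : ℕ) : ℝ) := by exact_mod_cast hlt
      rw [low m h]
      nlinarith
    · have hmin : min N R = R := min_eq_right (le_trans h hm)
      rw [hmin] at hne ⊢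
      have hlt : R < m := lt_of_le_of_ne h (Ne.symm hne)
      have hlt' : (R : ℝ) < m := by exact_mod_cast hlt
      rw [high m h]
      nlinarith
  refine ⟨?_, strict, ?_⟩
  · intro m hm
    by_cases h : m = min N R
    · rw [h]
    · exact (strict m hm h).le
  · rw [low (min N R) (min_le_right _ _)]
    rcases le_total N R with h | h
    · have h' : (N : ℝ) ≤ R := by exact_mod_cast h
      rw [min_eq_left h, min_eq_left h', max_eq_left (by linarith)]
      ring
    · have h' : (R : ℝ) ≤ N := by exact_mod_cast h
      rw [min_eq_right h, min_eq_right h', max_eq_right (by linarith)]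
      ring
end

section
/- If R < N ≤ σ0, then (γN − R(γ−1)) / (R + β(N − R)) ≤ β / (β − (R/N)(β−1)) < 1/(1 − R/N). In particular, in this regime the pure Price of Anarchy is strictly smaller than 1/(1 − R/N). -/
/-- If R < N ≤ σ0, then
(γN − R(γ−1))/(R + β(N − R)) ≤ β/(β − (R/N)(β−1)) < 1/(1 − R/N).
In particular the pure Price of Anarchy is strictly smaller than 1/(1 − R/N). -/
theorem stmt_9 (N R : ℕ) (hN : 1 < N) (hR : 1 ≤ R)
    (β γ δ σ0 : ℝ) (hβ : 1 < β) (hβγ : β < γ)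
    (hδ : δ = γ - β) (hσ0 : σ0 = R * (γ - 1) / δ)
    (hRN : R < N) (hle : (N : ℝ) ≤ σ0) :
    (γ * N - R * (γ - 1)) / ((R : ℝ) + β * ((N : ℝ) - (R : ℝ)))
      ≤ β / (β - ((R : ℝ) / (N : ℝ)) * (β - 1)) ∧
    β / (β - ((R : ℝ) / (N : ℝ)) * (β - 1)) < 1 / (1 - (R : ℝ) / (N : ℝ)) ∧
    (γ * N - R * (γ - 1)) / ((R : ℝ) + β * ((N : ℝ) - (R : ℝ)))
      < 1 / (1 - (R : ℝ) / (N : ℝ)) := by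
  have hRpos : (0 : ℝ) < R := by exact_mod_cast hR
  have hlt : (R : ℝ) < N := by exact_mod_cast hRN
  have hNpos : (0 : ℝ) < N := hRpos.trans hlt
  have hNR : (0 : ℝ) < (N : ℝ) - R := sub_pos.mpr hlt
  have hδpos : 0 < δ := by rw [hδ]; linarith
  have hM : 0 < β * ((N : ℝ) - R) := mul_pos (by linarith) hNR
  have hD : 0 < (R : ℝ) + β * ((N : ℝ) - R) := by linarith
  have e1 : β / (β - ((R : ℝ) / (N : ℝ)) * (β - 1))
      = β * N / ((R : ℝ) + β * ((N : ℝ) - R)) := by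
    have h : β - ((R : ℝ) / (N : ℝ)) * (β - 1)
        = ((R : ℝ) + β * ((N : ℝ) - R)) / N := by
      field_simp
      ring
    rw [h, div_div_eq_mul_div]
  have e2 : 1 / (1 - (R : ℝ) / (N : ℝ)) = N / ((N : ℝ) - R) := by
    have h : 1 - (R : ℝ) / (N : ℝ) = ((N : ℝ) - R) / N := by
      field_simp
    rw [h, one_div_div]
  have key : (N : ℝ) * (γ - β) ≤ R * (γ - 1) := by
    rw [hσ0, le_div_iff₀ hδpos, hδ] at hle
    exact hle
  have h1 : (γ * N - R * (γ - 1)) / ((R : ℝ) + β * ((N : ℝ) - (R : ℝ)))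
      ≤ β / (β - ((R : ℝ) / (N : ℝ)) * (β - 1)) := by
    rw [e1]
    exact div_le_div_of_nonneg_right (by linarith) hD.le
  have h2 : β / (β - ((R : ℝ) / (N : ℝ)) * (β - 1)) < 1 / (1 - (R : ℝ) / (N : ℝ)) := by
    rw [e1, e2, div_lt_div_iff₀ hD hNR]
    nlinarith [mul_pos hNpos hRpos]
  exact ⟨h1, h2, h1.trans_lt h2⟩
end

section
/- If N > σ0, then (⌊σ0⌋δ − R(γ−1) + βN) / (R + β(N − R)) ≤ βN/(βN − (β−1)R) < 1/(1 − R/N) = N/(N − R). In particular, in this regime the pure Price of Anarchy is strictly smaller than 1/(1 − R/N) (note N > σ0 > R). -/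
/-- If N > σ0, then
(⌊σ0⌋δ − R(γ−1) + βN)/(R + β(N − R)) ≤ βN/(βN − (β−1)R) < 1/(1 − R/N) = N/(N − R).
In particular the pure Price of Anarchy is strictly smaller than 1/(1 − R/N). -/
theorem stmt_10 (N R : ℕ) (hN : 1 < N) (hR : 1 ≤ R)
    (β γ δ σ0 : ℝ) (hβ : 1 < β) (hβγ : β < γ)
    (hδ : δ = γ - β) (hσ0 : σ0 = R * (γ - 1) / δ)
    (hlt : σ0 < (N : ℝ)) :
    (R : ℝ) < σ0 ∧
    ((⌊σ0⌋₊ : ℝ) * δ - R * (γ - 1) + β * N) / ((R : ℝ) + β * ((N : ℝ) - (R : ℝ)))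
      ≤ β * N / (β * N - (β - 1) * R) ∧
    β * N / (β * N - (β - 1) * R) < 1 / (1 - (R : ℝ) / (N : ℝ)) ∧
    1 / (1 - (R : ℝ) / (N : ℝ)) = (N : ℝ) / ((N : ℝ) - (R : ℝ)) ∧
    ((⌊σ0⌋₊ : ℝ) * δ - R * (γ - 1) + β * N) / ((R : ℝ) + β * ((N : ℝ) - (R : ℝ)))
      < 1 / (1 - (R : ℝ) / (N : ℝ)) := by
  have hδ0 : 0 < δ := by rw [hδ]; linarith
  have hR0 : (0 : ℝ) < R := by exact_mod_cast hR
  have hmul : σ0 * δ = R * (γ - 1) := by rw [hσ0]; field_simp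
  have h1 : (R : ℝ) < σ0 := by
    rw [hσ0, lt_div_iff₀ hδ0, hδ]
    nlinarith
  have hNR : (0 : ℝ) < N - R := by linarith
  have hN0 : (0 : ℝ) < N := by linarith
  have hD : (0 : ℝ) < R + β * (N - R) := by
    have := mul_pos (by linarith : (0 : ℝ) < β) hNR
    linarith
  have hDeq : β * N - (β - 1) * R = R + β * ((N : ℝ) - R) := by ring
  have hfl : (⌊σ0⌋₊ : ℝ) * δ ≤ R * (γ - 1) := by
    rw [← hmul]
    exact mul_le_mul_of_nonneg_right (Nat.floor_le (by linarith)) hδ0.le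
  have h4 : 1 / (1 - (R : ℝ) / (N : ℝ)) = (N : ℝ) / ((N : ℝ) - (R : ℝ)) := by
    rw [one_sub_div hN0.ne', one_div_div]
  have h2 : ((⌊σ0⌋₊ : ℝ) * δ - R * (γ - 1) + β * N) / ((R : ℝ) + β * ((N : ℝ) - (R : ℝ)))
      ≤ β * N / (β * N - (β - 1) * R) := by
    rw [hDeq]
    exact div_le_div_of_nonneg_right (by linarith) hD.le
  have h3 : β * N / (β * N - (β - 1) * R) < 1 / (1 - (R : ℝ) / (N : ℝ)) := by
    rw [h4, hDeq, div_lt_div_iff₀ hD hNR]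
    nlinarith [mul_pos hN0 hR0]
  exact ⟨h1, h2, h3, h4, h2.trans_lt h3⟩
end

section
/- If N > R, then the function f is strictly increasing on the interval [0, 1]. -/
/-- Bernstein operator, via the de Casteljau recursion. -/
noncomputable def bernE : ℕ → (ℕ → ℝ) → ℝ → ℝ
  | 0, a, _ => a 0
  | n + 1, a, p => (1 - p) * bernE n a p + p * bernE n (fun k => a (k + 1)) p

theorem bernE_eq_anti (n : ℕ) (p : ℝ) : ∀ a : ℕ → ℝ, bernE n a p =
    ∑ ij ∈ Finset.HasAntidiagonal.antidiagonal n, (n.choose ij.1 : ℝ) * (a ij.1 * p ^ ij.1 * (1 - p) ^ ij.2) := by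
  induction n with
  | zero => intro a; simp [bernE]
  | succ n ih =>
    intro a
    rw [Finset.sum_antidiagonal_choose_succ_mul (fun i j => a i * p ^ i * (1 - p) ^ j) n]
    rw [bernE, ih, ih, Finset.mul_sum, Finset.mul_sum]
    congr 1
    · apply Finset.sum_congr rfl
      intro x _
      ring
    · apply Finset.sum_congr rfl
      intro x hx
      rw [Finset.HasAntidiagonal.mem_antidiagonal] at hx
      rw [Nat.choose_symm_of_eq_add hx.symm]
      ring

theorem bernE_eq_sum (n : ℕ) (p : ℝ) (a : ℕ → ℝ) : bernE n a p =
    ∑ k ∈ Finset.range (n + 1), a k * (n.choose k : ℝ) * p ^ k * (1 - p) ^ (n - k) := by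
  rw [bernE_eq_anti, Finset.Nat.sum_antidiagonal_eq_sum_range_succ
    (fun i j => (n.choose i : ℝ) * (a i * p ^ i * (1 - p) ^ j))]
  apply Finset.sum_congr rfl
  intro k _
  ring

theorem bernE_le (n : ℕ) (p : ℝ) (h0 : 0 ≤ p) (h1 : p ≤ 1) : ∀ a b : ℕ → ℝ, (∀ k, a k ≤ b k) →
    bernE n a p ≤ bernE n b p := by
  induction n with
  | zero => intro a b h; exact h 0
  | succ n ih =>
    intro a b h
    have e1 := mul_le_mul_of_nonneg_left (ih a b h) (sub_nonneg.2 h1)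
    have e2 := mul_le_mul_of_nonneg_left
      (ih (fun k => a (k + 1)) (fun k => b (k + 1)) (fun k => h _)) h0
    simp only [bernE]
    linarith

theorem bernE_lt (n : ℕ) (p : ℝ) (h0 : 0 ≤ p) (h1 : p < 1) : ∀ a b : ℕ → ℝ, (∀ k, a k ≤ b k) →
    a 0 < b 0 → bernE n a p < bernE n b p := by
  induction n with
  | zero => intro a b _ h; exact h
  | succ n ih =>
    intro a b h hs
    have e1 := mul_lt_mul_of_pos_left (ih a b h hs) (sub_pos.2 h1)
    have e2 := mul_le_mul_of_nonneg_left
      (bernE_le n p h0 h1.le (fun k => a (k + 1)) (fun k => b (k + 1)) (fun k => h _)) h0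
    simp only [bernE]
    linarith

theorem bernE_mono (n : ℕ) (p q : ℝ) (h0 : 0 ≤ p) (hpq : p < q) (h1 : q ≤ 1) :
    ∀ a : ℕ → ℝ, Monotone a →
    bernE n a p ≤ bernE n a q ∧ (a 0 < a n → bernE n a p < bernE n a q) := by
  induction n with
  | zero => intro a _; exact ⟨le_rfl, fun h => absurd h (lt_irrefl _)⟩
  | succ n ih =>
    intro a ha
    have ha' : Monotone (fun k => a (k + 1)) := fun i j hij => ha (by omega)
    have hs : ∀ k, a k ≤ a (k + 1) := fun k => ha (by omega)
    have e1 := mul_nonneg (sub_nonneg.2 h1) (sub_nonneg.2 (ih a ha).1)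
    have e2 := mul_nonneg (h0.trans hpq.le) (sub_nonneg.2 (ih _ ha').1)
    have e3 := mul_nonneg (sub_nonneg.2 hpq.le)
      (sub_nonneg.2 (bernE_le n p h0 (hpq.le.trans h1) a (fun k => a (k + 1)) hs))
    simp only [bernE]
    refine ⟨by linarith, fun hlt => ?_⟩
    rcases (hs 0).lt_or_eq with h | h
    · have e4 := mul_pos (sub_pos.2 hpq)
        (sub_pos.2 (bernE_lt n p h0 (hpq.trans_le h1) a (fun k => a (k + 1)) hs h))
      linarith
    · have e4 := mul_pos (h0.trans_lt hpq) (sub_pos.2 ((ih _ ha').2 (by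
        show a (0 + 1) < a (n + 1)
        rwa [← h])))
      linarith

/-- If N > R, then f is strictly increasing on [0, 1]. -/
theorem stmt_12 (N R : ℕ) (hN : 1 < N) (hR : 1 ≤ R)
    (β γ : ℝ) (hβ : 1 < β) (hβγ : β < γ)
    (W : ℕ → ℝ)
    (hW : ∀ k : ℕ, W k = min 1 ((R : ℝ) / (k : ℝ)) + (1 - min 1 ((R : ℝ) / (k : ℝ))) * γ)
    (f : ℝ → ℝ)
    (hf : ∀ p : ℝ, f p = -β + ∑ k ∈ Finset.range N,
      W (k + 1) * ((N - 1).choose k : ℝ) * p ^ k * (1 - p) ^ (N - 1 - k))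
    (hRN : R < N) :
    StrictMonoOn f (Set.Icc 0 1) := by
  obtain ⟨n, rfl⟩ : ∃ n, N = n + 1 := ⟨N - 1, by omega⟩
  have hf' : ∀ p, f p = -β + bernE n (fun k => W (k + 1)) p := by
    intro p
    rw [hf, bernE_eq_sum]
    simp
  have hmono : Monotone (fun k => W (k + 1)) := by
    intro i j hij
    have hm : min 1 ((R : ℝ) / ((j + 1 : ℕ) : ℝ)) ≤ min 1 ((R : ℝ) / ((i + 1 : ℕ) : ℝ)) := by
      apply min_le_min le_rfl
      apply div_le_div_of_nonneg_left (by positivity) (by positivity)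
      exact_mod_cast (by omega : i + 1 ≤ j + 1)
    show W (i + 1) ≤ W (j + 1)
    rw [hW, hW]
    nlinarith
  have hlt : W (0 + 1) < W (n + 1) := by
    have h1 : min 1 ((R : ℝ) / ((0 + 1 : ℕ) : ℝ)) = 1 := by
      apply min_eq_left
      have : (1 : ℝ) ≤ R := by exact_mod_cast hR
      simpa using this
    have h2 : min 1 ((R : ℝ) / ((n + 1 : ℕ) : ℝ)) < 1 := by
      apply min_lt_of_right_lt
      rw [div_lt_one (by positivity)]
      exact_mod_cast hRN
    rw [hW, hW, h1]
    nlinarith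
  intro p hp q hq hpq
  rw [hf', hf']
  have := (bernE_mono n p q hp.1 hpq hq.2 _ hmono).2 hlt
  linarith
end

section
/- If N ≤ σ0, then f(p) ≤ 0 for all p ∈ [0, 1] and f(p) < 0 for all p ∈ [0, 1); consequently, competing for public parking is a best response against any symmetric mixed strategy, so the pure action profile with competing probability p = 1 is a symmetric equilibrium of the game. -/
/-- If N ≤ σ0, then f(p) ≤ 0 for all p ∈ [0,1] and f(p) < 0 for all
p ∈ [0,1); i.e. competing is a best response against any symmetric mixed strategy, so
p = 1 is a symmetric equilibrium. -/
theorem stmt_13 (N R : ℕ) (hN : 1 < N) (hR : 1 ≤ R)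
    (β γ δ σ0 : ℝ) (hβ : 1 < β) (hβγ : β < γ)
    (hδ : δ = γ - β) (hσ0 : σ0 = R * (γ - 1) / δ)
    (W : ℕ → ℝ)
    (hW : ∀ k : ℕ, W k = min 1 ((R : ℝ) / (k : ℝ)) + (1 - min 1 ((R : ℝ) / (k : ℝ))) * γ)
    (f : ℝ → ℝ)
    (hf : ∀ p : ℝ, f p = -β + ∑ k ∈ Finset.range N,
      W (k + 1) * ((N - 1).choose k : ℝ) * p ^ k * (1 - p) ^ (N - 1 - k))
    (hle : (N : ℝ) ≤ σ0) :
    (∀ p ∈ Set.Icc (0 : ℝ) 1, f p ≤ 0) ∧ (∀ p ∈ Set.Ico (0 : ℝ) 1, f p < 0) := by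
  have hN1 : N - 1 + 1 = N := by omega
  have hδ0 : 0 < δ := by linarith
  have hNR : (N : ℝ) * δ ≤ R * (γ - 1) := by
    rw [hσ0, le_div_iff₀ hδ0] at hle
    exact hle
  have hWle : ∀ k ∈ Finset.range N, W (k + 1) ≤ β := by
    intro k hk
    have hk' : ((k + 1 : ℕ) : ℝ) ≤ N := by
      exact_mod_cast Finset.mem_range.mp hk
    have hkpos : (0 : ℝ) < ((k + 1 : ℕ) : ℝ) := by positivity
    have hγ : 0 < γ - 1 := by linarith
    have hm : δ / (γ - 1) ≤ min 1 ((R : ℝ) / ((k + 1 : ℕ) : ℝ)) := by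
      apply le_min
      · rw [div_le_one hγ]; linarith
      · rw [div_le_div_iff₀ hγ hkpos]
        nlinarith
    rw [div_le_iff₀ hγ] at hm
    rw [hW]
    linarith
  have hW1 : W (0 + 1) < β := by
    have h1 : min 1 ((R : ℝ) / ((0 + 1 : ℕ) : ℝ)) = 1 := by
      apply min_eq_left
      simpa using hR
    rw [hW, h1]
    linarith
  have hsum : ∀ p : ℝ, ∑ k ∈ Finset.range N,
      β * ((N - 1).choose k : ℝ) * p ^ k * (1 - p) ^ (N - 1 - k) = β := by
    intro p
    have h := add_pow p (1 - p) (N - 1)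
    rw [hN1] at h
    have h2 : p + (1 - p) = 1 := by ring
    rw [h2, one_pow] at h
    calc _ = β * ∑ k ∈ Finset.range N,
          p ^ k * (1 - p) ^ (N - 1 - k) * ((N - 1).choose k : ℝ) := by
          rw [Finset.mul_sum]
          exact Finset.sum_congr rfl fun k _ => by ring
      _ = β := by rw [← h, mul_one]
  have hterm : ∀ p : ℝ, 0 ≤ p → p ≤ 1 → ∀ k ∈ Finset.range N,
      W (k + 1) * ((N - 1).choose k : ℝ) * p ^ k * (1 - p) ^ (N - 1 - k) ≤
      β * ((N - 1).choose k : ℝ) * p ^ k * (1 - p) ^ (N - 1 - k) := by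
    intro p h0 h1 k hk
    have h3 : 0 ≤ 1 - p := by linarith
    have := hWle k hk
    gcongr
  constructor
  · rintro p ⟨h0, h1⟩
    have := Finset.sum_le_sum (hterm p h0 h1)
    rw [hsum] at this
    rw [hf]
    linarith
  · rintro p ⟨h0, h1⟩
    have hlt := Finset.sum_lt_sum (hterm p h0 h1.le)
      ⟨0, Finset.mem_range.mpr (by omega), by
        have h3 : 0 < (1 - p) ^ (N - 1 - 0) := pow_pos (by linarith) _
        simp only [Nat.choose_zero_right, Nat.cast_one, mul_one, pow_zero]
        exact mul_lt_mul_of_pos_right hW1 h3⟩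
    rw [hsum] at hlt
    rw [hf]
    linarith
end

section
/- If N > σ0, then there exists a unique p* ∈ (0, 1) with f(p*) = 0; moreover f(p) < 0 for p ∈ [0, p*) and f(p) > 0 for p ∈ (p*, 1]. (This p* is the competing probability of the unique symmetric mixed-action Nash equilibrium of the parking spot selection game.) -/
/-- Bernstein sum. -/
noncomputable def bernS (n : ℕ) (w : ℕ → ℝ) (p : ℝ) : ℝ :=
  ∑ k ∈ Finset.range (n + 1), w k * (n.choose k : ℝ) * p ^ k * (1 - p) ^ (n - k)

lemma bernS_succ (n : ℕ) (w : ℕ → ℝ) (p : ℝ) :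
    bernS (n + 1) w p = (1 - p) * bernS n w p + p * bernS n (fun k => w (k + 1)) p := by
  have h1 : (1 - p) * bernS n w p = ∑ k ∈ Finset.range (n + 2),
      w k * (n.choose k : ℝ) * p ^ k * (1 - p) ^ (n + 1 - k) := by
    rw [Finset.sum_range_succ, bernS, Finset.mul_sum]
    simp only [Nat.choose_succ_self, Nat.cast_zero, mul_zero, zero_mul, add_zero]
    refine Finset.sum_congr rfl fun k hk => ?_
    have hk' : k ≤ n := by simpa [Nat.lt_succ_iff] using hk
    rw [Nat.sub_add_comm hk', pow_succ]
    ring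
  rw [h1, bernS, bernS, Finset.sum_range_succ', Finset.sum_range_succ' _ (n + 1), Finset.mul_sum,
    add_right_comm, ← Finset.sum_add_distrib]
  congr 1
  · refine Finset.sum_congr rfl fun k hk => ?_
    rw [Nat.choose_succ_succ, Nat.add_sub_add_right]
    push_cast
    ring
  · simp

lemma bernS_le (n : ℕ) (w v : ℕ → ℝ) (h : ∀ k, w k ≤ v k) (p : ℝ) (h0 : 0 ≤ p) (h1 : p ≤ 1) :
    bernS n w p ≤ bernS n v p := by
  have : 0 ≤ 1 - p := by linarith
  refine Finset.sum_le_sum fun k _ => ?_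
  have := h k
  gcongr

lemma bernS_lt (n : ℕ) (w v : ℕ → ℝ) (h : ∀ k, w k ≤ v k) (j : ℕ) (hj : j ≤ n) (hlt : w j < v j)
    (p : ℝ) (h0 : 0 < p) (h1 : p < 1) : bernS n w p < bernS n v p := by
  have h2 : 0 < 1 - p := by linarith
  refine Finset.sum_lt_sum (fun k _ => ?_) ⟨j, by simpa [Nat.lt_succ_iff] using hj, ?_⟩
  · have := h k
    gcongr
  · have : (0 : ℝ) < n.choose j := by exact_mod_cast Nat.choose_pos hj
    gcongr

lemma bernS_mono (n : ℕ) : ∀ (w : ℕ → ℝ), (∀ k, w k ≤ w (k + 1)) → ∀ p q : ℝ, 0 ≤ p → p ≤ q →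
    q ≤ 1 → bernS n w p ≤ bernS n w q := by
  induction n with
  | zero => intro w _ p q _ _ _; simp [bernS]
  | succ n ih =>
    intro w hw p q h0 hpq h1
    rw [bernS_succ, bernS_succ]
    have a := ih w hw p q h0 hpq h1
    have b := ih (fun k => w (k + 1)) (fun k => hw (k + 1)) p q h0 hpq h1
    have c := bernS_le n w (fun k => w (k + 1)) hw p h0 (hpq.trans h1)
    nlinarith [mul_nonneg (sub_nonneg.2 h1) (sub_nonneg.2 a),
      mul_nonneg (h0.trans hpq) (sub_nonneg.2 b), mul_nonneg (sub_nonneg.2 hpq) (sub_nonneg.2 c)]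

lemma bernS_strict (n : ℕ) (w : ℕ → ℝ) (hw : ∀ k, w k ≤ w (k + 1)) (hs : w 0 < w (n + 1))
    (p q : ℝ) (h0 : 0 < p) (hpq : p < q) (h1 : q ≤ 1) :
    bernS (n + 1) w p < bernS (n + 1) w q := by
  obtain ⟨j, hj, hlt⟩ : ∃ j, j ≤ n ∧ w j < w (j + 1) := by
    by_contra! hc
    have : ∀ m, m ≤ n + 1 → w m ≤ w 0 := by
      intro m
      induction m with
      | zero => intro _; exact le_rfl
      | succ m ih => intro hm; exact (hc m (by omega)).trans (ih (by omega))
    exact absurd (this (n + 1) le_rfl) (not_le.2 hs)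
  rw [bernS_succ, bernS_succ]
  have a := bernS_mono n w hw p q h0.le hpq.le h1
  have b := bernS_mono n (fun k => w (k + 1)) (fun k => hw (k + 1)) p q h0.le hpq.le h1
  have c := bernS_lt n w (fun k => w (k + 1)) hw j hj hlt p h0 (hpq.trans_le h1)
  nlinarith [mul_nonneg (sub_nonneg.2 h1) (sub_nonneg.2 a),
    mul_nonneg (h0.trans hpq).le (sub_nonneg.2 b), mul_pos (sub_pos.2 hpq) (sub_pos.2 c)]


/-- If N > σ0, then there exists a unique p* ∈ (0,1) with f(p*) = 0;
moreover f(p) < 0 for p ∈ [0, p*) and f(p) > 0 for p ∈ (p*, 1]. -/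
theorem stmt_14 (N R : ℕ) (hN : 1 < N) (hR : 1 ≤ R)
    (β γ δ σ0 : ℝ) (hβ : 1 < β) (hβγ : β < γ)
    (hδ : δ = γ - β) (hσ0 : σ0 = R * (γ - 1) / δ)
    (W : ℕ → ℝ)
    (hW : ∀ k : ℕ, W k = min 1 ((R : ℝ) / (k : ℝ)) + (1 - min 1 ((R : ℝ) / (k : ℝ))) * γ)
    (f : ℝ → ℝ)
    (hf : ∀ p : ℝ, f p = -β + ∑ k ∈ Finset.range N,
      W (k + 1) * ((N - 1).choose k : ℝ) * p ^ k * (1 - p) ^ (N - 1 - k))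
    (hlt : σ0 < (N : ℝ)) :
    ∃ pstar : ℝ, pstar ∈ Set.Ioo (0 : ℝ) 1 ∧ f pstar = 0 ∧
      (∀ p ∈ Set.Ico (0 : ℝ) pstar, f p < 0) ∧
      (∀ p ∈ Set.Ioc pstar (1 : ℝ), 0 < f p) ∧
      (∀ p ∈ Set.Ioo (0 : ℝ) 1, f p = 0 → p = pstar) := by
  obtain ⟨n, rfl⟩ : ∃ n, N = n + 2 := ⟨N - 2, by omega⟩
  have hf' : ∀ p, f p = -β + bernS (n + 1) (fun k => W (k + 1)) p := by
    intro p
    rw [hf p, bernS]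
    rfl
  have hR' : (1 : ℝ) ≤ R := by exact_mod_cast hR
  have hmono : ∀ k : ℕ, W (k + 1) ≤ W (k + 1 + 1) := by
    intro k
    rw [hW, hW]
    have : min 1 ((R : ℝ) / ((k + 1 + 1 : ℕ) : ℝ)) ≤ min 1 ((R : ℝ) / ((k + 1 : ℕ) : ℝ)) := by
      apply min_le_min le_rfl
      apply div_le_div_of_nonneg_left (by positivity) (by positivity)
      push_cast
      linarith
    nlinarith
  have hW1 : W 1 = 1 := by
    rw [hW]
    simp [hR']
  have hWN : β < W (n + 1 + 1) := by
    have hm : min 1 ((R : ℝ) / ((n + 1 + 1 : ℕ) : ℝ)) ≤ (R : ℝ) / ((n + 1 + 1 : ℕ) : ℝ) :=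
      min_le_right _ _
    rw [hW]
    have hd : 0 < δ := by linarith
    rw [hσ0, div_lt_iff₀ hd] at hlt
    have hp : (0 : ℝ) < ((n + 1 + 1 : ℕ) : ℝ) := by positivity
    have h2 : (R : ℝ) / ((n + 1 + 1 : ℕ) : ℝ) * (γ - 1) < δ := by
      rw [div_mul_eq_mul_div, div_lt_iff₀ hp, mul_comm δ]
      exact hlt
    nlinarith
  have hstrict : ∀ p q : ℝ, 0 < p → p < q → q ≤ 1 → f p < f q := by
    intro p q h0 hpq h1
    rw [hf', hf']
    have := bernS_strict n (fun k => W (k + 1)) hmono (by simp only [zero_add, hW1]; linarith)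
      p q h0 hpq h1
    linarith
  have f0 : f 0 < 0 := by
    rw [hf', bernS, Finset.sum_range_succ']
    simp [hW1]
    linarith
  have f1 : 0 < f 1 := by
    rw [hf', bernS, Finset.sum_range_succ, Finset.sum_eq_zero]
    · simp
      linarith
    · intro k hk
      have hk' : k < n + 1 := by simpa using hk
      have : n + 1 - k ≠ 0 := by omega
      simp [this]
  have hc : Continuous f := by
    have : f = fun p => -β + bernS (n + 1) (fun k => W (k + 1)) p := funext hf'
    rw [this]
    unfold bernS
    fun_prop
  obtain ⟨x, hx, hx0⟩ := intermediate_value_Ioo (zero_le_one (α := ℝ)) hc.continuousOn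
    (show (0 : ℝ) ∈ Set.Ioo (f 0) (f 1) from ⟨f0, f1⟩)
  refine ⟨x, hx, hx0, ?_, ?_, ?_⟩
  · rintro p ⟨h0, h1⟩
    rcases h0.eq_or_lt with rfl | h0
    · exact f0
    · rw [← hx0]
      exact hstrict p x h0 h1 hx.2.le
  · rintro p ⟨h0, h1⟩
    rw [← hx0]
    exact hstrict x p hx.1 h0 h1
  · rintro p ⟨h0, h1⟩ hp
    rcases lt_trichotomy p x with h | h | h
    · have := hstrict p x h0 h hx.2.le
      linarith
    · exact h
    · have := hstrict x p hx.1 h h1.le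
      linarith
end

section
/- If N > R and the activity probability satisfies q ∈ (0, 1], then the function h is strictly increasing on the interval [0, 1]. -/
/-- Bernstein average of `f`. -/
noncomputable def bern (f : ℕ → ℝ) (n : ℕ) (p : ℝ) : ℝ :=
  ∑ k ∈ Finset.range (n + 1), f k * (n.choose k : ℝ) * p ^ k * (1 - p) ^ (n - k)

theorem bern_zero (f : ℕ → ℝ) (p : ℝ) : bern f 0 p = f 0 := by
  simp [bern]

theorem bern_succ (f : ℕ → ℝ) (n : ℕ) (p : ℝ) :
    bern f (n + 1) p = (1 - p) * bern f n p + p * bern (fun k => f (k + 1)) n p := by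
  have h1 : (1 - p) * bern f n p = ∑ k ∈ Finset.range (n + 2),
      f k * (n.choose k : ℝ) * p ^ k * (1 - p) ^ (n + 1 - k) := by
    rw [Finset.sum_range_succ, bern, Finset.mul_sum]
    simp only [Nat.choose_succ_self, Nat.cast_zero, mul_zero, zero_mul, add_zero]
    apply Finset.sum_congr rfl
    intro k hk
    have hk' : n + 1 - k = (n - k) + 1 := by
      have := Finset.mem_range.mp hk
      omega
    rw [hk', pow_succ]
    ring
  rw [h1, bern, Finset.sum_range_succ', Finset.sum_range_succ' _ (n + 1), bern, Finset.mul_sum,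
    add_right_comm, ← Finset.sum_add_distrib]
  congr 1
  · apply Finset.sum_congr rfl
    intro k hk
    rw [Nat.choose_succ_succ, Nat.add_sub_add_right]
    push_cast
    ring
  · simp

theorem bern_le (n : ℕ) : ∀ (f g : ℕ → ℝ), (∀ k, f k ≤ g k) → ∀ p ∈ Set.Icc (0 : ℝ) 1,
    bern f n p ≤ bern g n p := by
  intro f g hfg p hp
  have h0 := hp.1
  have h1 : 0 ≤ 1 - p := sub_nonneg.mpr hp.2
  unfold bern
  gcongr with k hk
  exact hfg k

theorem bern_mono (n : ℕ) : ∀ (f : ℕ → ℝ), (∀ k, f k ≤ f (k + 1)) →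
    MonotoneOn (bern f n) (Set.Icc 0 1) := by
  induction n with
  | zero => intro f _ a _ b _ _; simp [bern_zero]
  | succ n ih =>
    intro f hf a ha b hb hab
    have e1 := ih f hf ha hb hab
    have e2 := ih (fun k => f (k + 1)) (fun k => hf (k + 1)) ha hb hab
    have e3 := bern_le n f (fun k => f (k + 1)) hf a ha
    rw [bern_succ, bern_succ]
    nlinarith [mul_nonneg (sub_nonneg.mpr hb.2) (sub_nonneg.mpr e1),
      mul_nonneg hb.1 (sub_nonneg.mpr e2), mul_nonneg (sub_nonneg.mpr hab) (sub_nonneg.mpr e3)]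

theorem bern_strict (n : ℕ) : ∀ (f : ℕ → ℝ), (∀ k, f k ≤ f (k + 1)) → f n < f (n + 1) →
    StrictMonoOn (bern f (n + 1)) (Set.Icc 0 1) := by
  induction n with
  | zero =>
    intro f _ h a _ b _ hab
    simp only [bern_succ, bern_zero]
    simp only [zero_add] at h ⊢
    nlinarith [mul_pos (sub_pos.mpr hab) (sub_pos.mpr h)]
  | succ n ih =>
    intro f hf h a ha b hb hab
    have e1 := bern_mono (n + 1) f hf ha hb hab.le
    have e2 := ih (fun k => f (k + 1)) (fun k => hf (k + 1)) h ha hb hab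
    have e3 := bern_le (n + 1) f (fun k => f (k + 1)) hf a ha
    have hb0 : 0 < b := lt_of_le_of_lt ha.1 hab
    rw [bern_succ f (n + 1), bern_succ f (n + 1)]
    nlinarith [mul_nonneg (sub_nonneg.mpr hb.2) (sub_nonneg.mpr e1),
      mul_pos hb0 (sub_pos.mpr e2), mul_nonneg (sub_nonneg.mpr hab.le) (sub_nonneg.mpr e3)]

/-- If N > R and the activity probability q ∈ (0,1], then h is strictly
increasing on [0, 1]. -/
theorem stmt_16 (N R : ℕ) (hN : 1 < N) (hR : 1 ≤ R)
    (β γ : ℝ) (hβ : 1 < β) (hβγ : β < γ)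
    (W : ℕ → ℝ)
    (hW : ∀ k : ℕ, W k = min 1 ((R : ℝ) / (k : ℝ)) + (1 - min 1 ((R : ℝ) / (k : ℝ))) * γ)
    (q : ℝ) (hq : q ∈ Set.Ioc (0 : ℝ) 1)
    (h : ℝ → ℝ)
    (hh : ∀ p : ℝ, h p = -β + ∑ n ∈ Finset.range N,
      ((N - 1).choose n : ℝ) * q ^ n * (1 - q) ^ (N - 1 - n) *
        ∑ k ∈ Finset.range (n + 1),
          W (k + 1) * (n.choose k : ℝ) * p ^ k * (1 - p) ^ (n - k))
    (hRN : R < N) :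
    StrictMonoOn h (Set.Icc 0 1) := by
  obtain ⟨m, rfl⟩ : ∃ m, N = m + 2 := ⟨N - 2, by omega⟩
  have hR0 : (0 : ℝ) < R := by exact_mod_cast hR
  have hmono : ∀ k : ℕ, W (k + 1) ≤ W (k + 1 + 1) := by
    intro k
    have hle : min 1 ((R : ℝ) / ((k + 1 + 1 : ℕ) : ℝ)) ≤ min 1 ((R : ℝ) / ((k + 1 : ℕ) : ℝ)) := by
      apply min_le_min le_rfl
      apply div_le_div_of_nonneg_left hR0.le
      · positivity
      · push_cast; linarith
    rw [hW, hW]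
    nlinarith
  have hstr : W (m + 1) < W (m + 1 + 1) := by
    have hRm : (R : ℝ) ≤ ((m + 1 : ℕ) : ℝ) := by exact_mod_cast (by omega : R ≤ m + 1)
    have hpos : (0 : ℝ) < ((m + 1 : ℕ) : ℝ) := by positivity
    have hlt : (R : ℝ) / ((m + 1 + 1 : ℕ) : ℝ) < (R : ℝ) / ((m + 1 : ℕ) : ℝ) := by
      apply div_lt_div_of_pos_left hR0 hpos
      push_cast; linarith
    have h1 : (R : ℝ) / ((m + 1 : ℕ) : ℝ) ≤ 1 := (div_le_one hpos).mpr hRm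
    rw [hW, hW, min_eq_right h1, min_eq_right (hlt.le.trans h1)]
    nlinarith
  have hq0 := hq.1
  have hq1 : 0 ≤ 1 - q := sub_nonneg.mpr hq.2
  intro a ha b hb hab
  rw [hh, hh]
  apply add_lt_add_right
  apply Finset.sum_lt_sum
  · intro n _
    apply mul_le_mul_of_nonneg_left
    · exact bern_mono n (fun k => W (k + 1)) hmono ha hb hab.le
    · positivity
  · refine ⟨m + 1, by simp, ?_⟩
    apply mul_lt_mul_of_pos_left
    · exact bern_strict m (fun k => W (k + 1)) hmono hstr ha hb hab
    · simp; positivity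
end

section
/- If the activity probability q ∈ [0, 1] satisfies f(q) < 0, then h(p) ≤ f(q) < 0 for all p ∈ [0, 1]; hence competing for public parking is a dominant choice for every active driver and the pure profile with competing probability p = 1 is the unique symmetric Bayesian equilibrium. -/
/-- If the activity probability q ∈ [0,1] satisfies f(q) < 0, then
h(p) ≤ f(q) < 0 for all p ∈ [0,1]; hence competing for public parking is a dominant
choice for every active driver. -/
theorem stmt_17 (N R : ℕ) (hN : 1 < N) (hR : 1 ≤ R)
    (β γ : ℝ) (hβ : 1 < β) (hβγ : β < γ)
    (W : ℕ → ℝ)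
    (hW : ∀ k : ℕ, W k = min 1 ((R : ℝ) / (k : ℝ)) + (1 - min 1 ((R : ℝ) / (k : ℝ))) * γ)
    (f : ℝ → ℝ)
    (hf : ∀ p : ℝ, f p = -β + ∑ k ∈ Finset.range N,
      W (k + 1) * ((N - 1).choose k : ℝ) * p ^ k * (1 - p) ^ (N - 1 - k))
    (q : ℝ) (hq : q ∈ Set.Icc (0 : ℝ) 1)
    (h : ℝ → ℝ)
    (hh : ∀ p : ℝ, h p = -β + ∑ n ∈ Finset.range N,
      ((N - 1).choose n : ℝ) * q ^ n * (1 - q) ^ (N - 1 - n) *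
        ∑ k ∈ Finset.range (n + 1),
          W (k + 1) * (n.choose k : ℝ) * p ^ k * (1 - p) ^ (n - k))
    (hfq : f q < 0) :
    ∀ p ∈ Set.Icc (0 : ℝ) 1, h p ≤ f q ∧ h p < 0 := by
  have hmono : ∀ a b : ℕ, a ≤ b → W (a + 1) ≤ W (b + 1) := by
    intro a b hab
    rw [hW, hW]
    have h1 : (R : ℝ) / ((b + 1 : ℕ) : ℝ) ≤ (R : ℝ) / ((a + 1 : ℕ) : ℝ) := by
      apply div_le_div_of_nonneg_left
      · positivity
      · positivity
      · exact_mod_cast Nat.succ_le_succ hab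
    have h2 := min_le_min_left (1 : ℝ) h1
    nlinarith
  intro p hp
  obtain ⟨hp0, hp1⟩ := hp
  obtain ⟨hq0, hq1⟩ := hq
  have hp1' : 0 ≤ 1 - p := by linarith
  have hq1' : 0 ≤ 1 - q := by linarith
  have hinner : ∀ n : ℕ, ∑ k ∈ Finset.range (n + 1),
      W (k + 1) * (n.choose k : ℝ) * p ^ k * (1 - p) ^ (n - k) ≤ W (n + 1) := by
    intro n
    have hone : ∑ k ∈ Finset.range (n + 1), p ^ k * (1 - p) ^ (n - k) * (n.choose k : ℝ) = 1 := by
      rw [← add_pow]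
      simp
    calc _ ≤ ∑ k ∈ Finset.range (n + 1),
          W (n + 1) * (p ^ k * (1 - p) ^ (n - k) * (n.choose k : ℝ)) := by
          apply Finset.sum_le_sum
          intro k hk
          have hkn : k ≤ n := Nat.lt_succ_iff.mp (Finset.mem_range.mp hk)
          have hnn : 0 ≤ p ^ k * (1 - p) ^ (n - k) * (n.choose k : ℝ) := by positivity
          have := mul_le_mul_of_nonneg_right (hmono k n hkn) hnn
          linarith
      _ = W (n + 1) := by rw [← Finset.mul_sum, hone, mul_one]
  have hle : h p ≤ f q := by
    rw [hh, hf]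
    refine (add_le_add_iff_left _).mpr (Finset.sum_le_sum fun n hn => ?_)
    have hnn : 0 ≤ ((N - 1).choose n : ℝ) * q ^ n * (1 - q) ^ (N - 1 - n) := by positivity
    have := mul_le_mul_of_nonneg_left (hinner n) hnn
    linarith
  exact ⟨hle, lt_of_le_of_lt hle hfq⟩
end

section
/- If N > R, the activity probability satisfies q ∈ (0, 1], and f(q) > 0, then there exists a unique p* ∈ (0, 1) with h(p*) = 0; moreover h(p) < 0 for p ∈ [0, p*) and h(p) > 0 for p ∈ (p*, 1]. (This p* is the competing probability of the unique symmetric mixed-action Bayesian-Nash equilibrium.) -/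
/-- Expectation of `g (Bin (m, p))`, defined recursively. -/
noncomputable def binE : ℕ → (ℕ → ℝ) → ℝ → ℝ
  | 0, g, _ => g 0
  | m + 1, g, p => (1 - p) * binE m g p + p * binE m (fun k => g (k + 1)) p

lemma binE_succ (m : ℕ) (g : ℕ → ℝ) (p : ℝ) :
    binE (m + 1) g p = (1 - p) * binE m g p + p * binE m (fun k => g (k + 1)) p := rfl

lemma binE_lin (m : ℕ) (g g' : ℕ → ℝ) (a b p : ℝ) :
    binE m (fun k => a * g k + b * g' k) p = a * binE m g p + b * binE m g' p := by
  induction m generalizing g g' with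
  | zero => simp [binE]
  | succ m ih =>
    rw [binE_succ, binE_succ, binE_succ, ih, ih (fun k => g (k + 1)) (fun k => g' (k + 1))]
    ring

lemma binE_eq_sum (m : ℕ) (g : ℕ → ℝ) (p : ℝ) :
    ∑ k ∈ Finset.range (m + 1), g k * (m.choose k : ℝ) * p ^ k * (1 - p) ^ (m - k)
      = binE m g p := by
  induction m generalizing g with
  | zero => simp [binE]
  | succ m ih =>
    rw [binE_succ, ← ih, ← ih, Finset.mul_sum, Finset.mul_sum, Finset.sum_range_succ']
    have h1 : ∀ k ∈ Finset.range (m + 1),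
        g (k + 1) * ((m + 1).choose (k + 1) : ℝ) * p ^ (k + 1) * (1 - p) ^ (m + 1 - (k + 1))
        = p * (g (k + 1) * (m.choose k : ℝ) * p ^ k * (1 - p) ^ (m - k))
          + g (k + 1) * (m.choose (k + 1) : ℝ) * p ^ (k + 1) * (1 - p) ^ (m - k) := by
      intro k _
      rw [Nat.choose_succ_succ, Nat.add_sub_add_right]
      push_cast
      ring
    rw [Finset.sum_congr rfl h1, Finset.sum_add_distrib]
    have h2 : ∑ k ∈ Finset.range (m + 1),
        (1 - p) * (g k * (m.choose k : ℝ) * p ^ k * (1 - p) ^ (m - k))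
        = ∑ k ∈ Finset.range (m + 1 + 1),
          g k * (m.choose k : ℝ) * p ^ k * (1 - p) ^ (m + 1 - k) := by
      rw [Finset.sum_range_succ _ (m + 1), Nat.choose_succ_self]
      simp only [Nat.cast_zero, mul_zero, zero_mul, add_zero]
      refine Finset.sum_congr rfl fun k hk => ?_
      have : m + 1 - k = (m - k) + 1 := by
        have := Finset.mem_range.1 hk
        omega
      rw [this]
      ring
    rw [h2, Finset.sum_range_succ' _ (m + 1)]
    simp only [Nat.add_sub_add_right, Nat.choose_zero_right]
    ring

lemma binE_thin (m : ℕ) (g : ℕ → ℝ) (p q : ℝ) :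
    binE m (fun n => binE n g p) q = binE m g (p * q) := by
  induction m generalizing g with
  | zero => simp [binE]
  | succ m ih =>
    rw [binE_succ, binE_succ]
    simp only [binE_succ _ g p]
    rw [binE_lin m (fun n => binE n g p) (fun n => binE n (fun k => g (k + 1)) p), ih, ih]
    ring

lemma binE_le_top (m : ℕ) (g : ℕ → ℝ) (hg : Monotone g) (t : ℝ) (h0 : 0 ≤ t) (h1 : t ≤ 1) :
    binE m g t ≤ g m := by
  induction m generalizing g with
  | zero => simp [binE]
  | succ m ih =>
    rw [binE_succ]
    have a := ih g hg
    have b := ih (fun k => g (k + 1)) (fun x y hxy => hg (by omega))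
    have c : g m ≤ g (m + 1) := hg (by omega)
    nlinarith

lemma binE_lt_top (m : ℕ) (g : ℕ → ℝ) (hg : Monotone g) (t : ℝ) (h0 : 0 ≤ t) (h1 : t < 1)
    (hlt : g 0 < g m) : binE m g t < g m := by
  induction m with
  | zero => exact absurd hlt (lt_irrefl _)
  | succ m ih =>
    rw [binE_succ]
    have b := binE_le_top m (fun k => g (k + 1)) (fun x y hxy => hg (by omega)) t h0 h1.le
    have a' := binE_le_top m g hg t h0 h1.le
    have c : g m ≤ g (m + 1) := hg (by omega)
    have a : binE m g t < g (m + 1) := by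
      by_cases hc : g 0 < g m
      · exact (ih hc).trans_le c
      · linarith
    nlinarith

lemma binE_mono (m : ℕ) (G g : ℕ → ℝ) (hG : ∀ n, G n ≤ g n) (p : ℝ) (h0 : 0 ≤ p) (h1 : p ≤ 1) :
    binE m G p ≤ binE m g p := by
  induction m generalizing G g with
  | zero => simpa [binE] using hG 0
  | succ m ih =>
    rw [binE_succ, binE_succ]
    have a := ih G g hG
    have b := ih (fun k => G (k + 1)) (fun k => g (k + 1)) (fun n => hG _)
    nlinarith

lemma binE_smono (m : ℕ) (G g : ℕ → ℝ) (hG : ∀ n, G n ≤ g n) (hm : G m < g m) (p : ℝ)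
    (h0 : 0 < p) (h1 : p ≤ 1) : binE m G p < binE m g p := by
  induction m generalizing G g with
  | zero => simpa [binE] using hm
  | succ m ih =>
    rw [binE_succ, binE_succ]
    have a := binE_mono m G g hG p h0.le h1
    have b := ih (fun k => G (k + 1)) (fun k => g (k + 1)) (fun n => hG _) hm
    nlinarith

lemma binE_strict (m : ℕ) (g : ℕ → ℝ) (hg : Monotone g) (hlt : g 0 < g m) (x y : ℝ)
    (hx : 0 ≤ x) (hxy : x < y) (hy : y ≤ 1) : binE m g x < binE m g y := by
  have hy0 : 0 < y := by linarith
  have e : x = x / y * y := by field_simp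
  have t0 : 0 ≤ x / y := by positivity
  have t1 : x / y < 1 := (div_lt_one hy0).2 hxy
  rw [e, ← binE_thin]
  exact binE_smono m _ g (fun n => binE_le_top n g hg _ t0 t1.le)
    (binE_lt_top m g hg _ t0 t1 hlt) y hy0 hy

lemma binE_cont (m : ℕ) (g : ℕ → ℝ) : Continuous (binE m g) := by
  induction m generalizing g with
  | zero => exact continuous_const
  | succ m ih =>
    have a := ih g
    have b := ih (fun k => g (k + 1))
    have : binE (m + 1) g =
      fun p => (1 - p) * binE m g p + p * binE m (fun k => g (k + 1)) p := rfl
    rw [this]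
    fun_prop

lemma binE_at_zero (m : ℕ) (g : ℕ → ℝ) : binE m g 0 = g 0 := by
  induction m with
  | zero => rfl
  | succ m ih => rw [binE_succ, ih]; ring

/-- If N > R, q ∈ (0,1], and f(q) > 0, then there exists a unique
p* ∈ (0,1) with h(p*) = 0; moreover h(p) < 0 for p ∈ [0, p*) and h(p) > 0 for
p ∈ (p*, 1]. -/
theorem stmt_18 (N R : ℕ) (hN : 1 < N) (hR : 1 ≤ R)
    (β γ : ℝ) (hβ : 1 < β) (hβγ : β < γ)
    (W : ℕ → ℝ)
    (hW : ∀ k : ℕ, W k = min 1 ((R : ℝ) / (k : ℝ)) + (1 - min 1 ((R : ℝ) / (k : ℝ))) * γ)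
    (f : ℝ → ℝ)
    (hf : ∀ p : ℝ, f p = -β + ∑ k ∈ Finset.range N,
      W (k + 1) * ((N - 1).choose k : ℝ) * p ^ k * (1 - p) ^ (N - 1 - k))
    (q : ℝ) (hq : q ∈ Set.Ioc (0 : ℝ) 1)
    (h : ℝ → ℝ)
    (hh : ∀ p : ℝ, h p = -β + ∑ n ∈ Finset.range N,
      ((N - 1).choose n : ℝ) * q ^ n * (1 - q) ^ (N - 1 - n) *
        ∑ k ∈ Finset.range (n + 1),
          W (k + 1) * (n.choose k : ℝ) * p ^ k * (1 - p) ^ (n - k))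
    (hRN : R < N) (hfq : 0 < f q) :
    ∃ pstar : ℝ, pstar ∈ Set.Ioo (0 : ℝ) 1 ∧ h pstar = 0 ∧
      (∀ p ∈ Set.Ico (0 : ℝ) pstar, h p < 0) ∧
      (∀ p ∈ Set.Ioc pstar (1 : ℝ), 0 < h p) ∧
      (∀ p ∈ Set.Ioo (0 : ℝ) 1, h p = 0 → p = pstar) := by
  obtain ⟨m, rfl⟩ : ∃ m, N = m + 1 := ⟨N - 1, by omega⟩
  obtain ⟨hq0, hq1⟩ := hq
  simp only [Nat.add_sub_cancel] at hf hh
  set g : ℕ → ℝ := fun k => W (k + 1) with hgdef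
  have hf' : ∀ p, f p = -β + binE m g p := fun p => by
    rw [hf, ← binE_eq_sum]
  have hh' : ∀ p, h p = f (p * q) := fun p => by
    rw [hh, hf', ← binE_thin, ← binE_eq_sum m]
    congr 1
    refine Finset.sum_congr rfl fun n _ => ?_
    rw [← binE_eq_sum n]
    ring
  have hR' : (1 : ℝ) ≤ R := by exact_mod_cast hR
  have hRm : (R : ℝ) < m + 1 := by exact_mod_cast hRN
  have hg : Monotone g := by
    intro a b hab
    have hab' : (a : ℝ) ≤ b := by exact_mod_cast hab
    have : min 1 ((R : ℝ) / ((b + 1 : ℕ) : ℝ)) ≤ min 1 ((R : ℝ) / ((a + 1 : ℕ) : ℝ)) := by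
      refine min_le_min le_rfl ?_
      push_cast
      gcongr
    simp only [hgdef, hW]
    nlinarith
  have hg0 : g 0 = 1 := by
    simp [hgdef, hW, hR']
  have hgm : g 0 < g m := by
    rw [hg0]
    have : min 1 ((R : ℝ) / ((m + 1 : ℕ) : ℝ)) < 1 := by
      refine min_lt_of_right_lt ?_
      push_cast
      rw [div_lt_one (by positivity)]
      exact hRm
    simp only [hgdef, hW]
    nlinarith
  have hstrict : ∀ x y : ℝ, 0 ≤ x → x < y → y ≤ 1 → h x < h y := by
    intro x y hx hxy hy
    rw [hh', hh', hf', hf']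
    have := binE_strict m g hg hgm (x * q) (y * q) (by positivity) (by nlinarith) (by nlinarith)
    linarith
  have hcont : Continuous h := by
    have e : h = fun p => -β + binE m g (p * q) := by
      funext p
      rw [hh', hf']
    have c := binE_cont m g
    rw [e]
    fun_prop
  have h0 : h 0 < 0 := by
    rw [hh', hf', zero_mul, binE_at_zero, hg0]
    linarith
  have h1 : 0 < h 1 := by
    rw [hh', one_mul]
    exact hfq
  obtain ⟨s, ⟨hs0, hs1⟩, hs⟩ :=
    intermediate_value_Ioo (zero_le_one (α := ℝ)) hcont.continuousOn ⟨h0, h1⟩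
  refine ⟨s, ⟨hs0, hs1⟩, hs, ?_, ?_, ?_⟩
  · rintro p ⟨hp0, hp1⟩
    have := hstrict p s hp0 hp1 hs1.le
    linarith
  · rintro p ⟨hp0, hp1⟩
    have := hstrict s p hs0.le hp0 hp1
    linarith
  · rintro p ⟨hp0, hp1⟩ hp
    rcases lt_trichotomy p s with hlt | heq | hgt
    · have := hstrict p s hp0.le hlt hs1.le
      linarith
    · exact heq
    · have := hstrict s p hs0.le hgt hp1.le
      linarith
end
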